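/- arXiv:2512.20472 — 3 statements merged into one kernel-verified Lean document; each statement's English description precedes it below -/
import Mathlib

section
/- Let V be a nonzero finite-dimensional complex vector space, γ ∈ GL(V) of finite order, ζ ∈ ℂ a root of unity, and x ∈ End(V) satisfying γ∘x = ζ·(x∘γ). Assume V is indecomposable for the pair (γ, x), meaning: whenever V = M ⊕ M' is a direct sum of two subspaces each invariant under both γ and x, one of M, M' is zero. Then there exists an eigenvector v of γ such that the set {x^k v : k ∈ ℕ} spans V (a homogeneous cyclic generator). -/
/-!
Polynomials in `x` that are homogeneous for the grading by exponents modulo the order of `ζ`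
commute with `x` and, up to a scalar, with `γ`. Hence Fitting's lemma and indecomposability make
each of them invertible or nilpotent on `V`. As `K[X]` is a principal ideal domain, it follows that
the graded algebra `K[x]` has a unique minimal nonzero homogeneous ideal, generated by some `s(x)`.

Choose an eigenvector `v` of `γ` with `s(x) v ≠ 0` and an eigenfunctional `f` of `γ` with
`f (s(x) v) ≠ 0`. The kernel of the pairing `(a, b) ↦ f (a b v)` on `K[x]` is a homogeneous ideal
that misses `s(x)`, so it vanishes. A dimension count then shows that `K[x] v` is complementary to
the largest `x`-stable subspace of `ker f`. Both subspaces are stable under `γ` and `x`, so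
`K[x] v = V`.
-/

open Polynomial Module

section Scaling

variable {R A : Type*} [CommRing R] [Ring A] [Algebra R A]

/-- The substitution `X ↦ ζX`. It describes conjugation on polynomials in an element `x`
by any `g` with `g x g⁻¹ = ζ x`. -/
noncomputable def scaleX (ζ : Rˣ) : R[X] ≃ₐ[R] R[X] :=
  algEquivOfCompEqX (C (ζ : R) * X) (C (↑ζ⁻¹ : R) * X)
    (by simp [← mul_assoc, ← C_mul]) (by simp [← mul_assoc, ← C_mul])

lemma scaleX_apply (ζ : Rˣ) (q : R[X]) : scaleX ζ q = q.comp (C (ζ : R) * X) := by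
  rw [comp_eq_aeval]
  rfl

lemma natDegree_scaleX [IsDomain R] (ζ : Rˣ) (q : R[X]) :
    (scaleX ζ q).natDegree = q.natDegree := by
  rw [scaleX_apply, natDegree_comp, natDegree_C_mul_X _ ζ.ne_zero, mul_one]

lemma aeval_scaleX (x : A) (ζ : Rˣ) (q : R[X]) : aeval x (scaleX ζ q) = aeval (ζ • x) q := by
  rw [scaleX_apply, aeval_comp, map_mul, aeval_C, aeval_X, ← Algebra.smul_def, Units.smul_def]

lemma semiconjBy_aeval {R A : Type*} [CommSemiring R] [Semiring A] [Algebra R A] {g x y : A}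
    (h : SemiconjBy g x y) (q : R[X]) : SemiconjBy g (aeval x q) (aeval y q) := by
  induction q using Polynomial.induction_on' with
  | add p q hp hq => simpa only [map_add] using hp.add_right hq
  | monomial k r =>
    simpa only [aeval_monomial] using
      SemiconjBy.mul_right (Algebra.commute_algebraMap_right r g) (h.pow_right k)

lemma semiconjBy_aeval_scaleX {g x : A} {ζ : Rˣ} (hx : SemiconjBy g x (ζ • x)) (q : R[X]) :
    SemiconjBy g (aeval x q) (aeval x (scaleX ζ q)) :=
  aeval_scaleX x ζ q ▸ semiconjBy_aeval hx q

/-- Homogeneity of a polynomial for the grading of `R[X]` by exponents modulo the order of `ζ`,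
encoded by `q` spanning a `scaleX ζ`-stable ideal. Over a field this says that `q` is zero or an
eigenvector of `scaleX ζ`. -/
def IsScaleHomogeneous (ζ : Rˣ) (q : R[X]) : Prop :=
  Associated q (scaleX ζ q)

lemma IsScaleHomogeneous.of_mul_left [IsDomain R] {ζ : Rˣ} {p q : R[X]}
    (hpq : IsScaleHomogeneous ζ (p * q)) (hp : IsScaleHomogeneous ζ p) (hp0 : p ≠ 0) :
    IsScaleHomogeneous ζ q := by
  rw [IsScaleHomogeneous, map_mul] at hpq
  exact Associated.of_mul_left hpq hp hp0

lemma IsScaleHomogeneous.exists_scaleX_eq_smul [IsDomain R] {ζ : Rˣ} {q : R[X]}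
    (hq : IsScaleHomogeneous ζ q) : ∃ c : Rˣ, scaleX ζ q = c • q := by
  obtain ⟨u, hu⟩ := hq
  obtain ⟨c, hc, hcu⟩ := Polynomial.isUnit_iff.mp u.isUnit
  refine ⟨hc.unit, ?_⟩
  rw [← hu, ← hcu, mul_comm, ← smul_eq_C_mul, Units.smul_def, IsUnit.unit_spec]

lemma exists_isScaleHomogeneous_eq_span_singleton {K : Type*} [Field K] {ζ : Kˣ} {I : Ideal K[X]}
    (hI : I ≤ I.comap (scaleX ζ)) : ∃ q, IsScaleHomogeneous ζ q ∧ I = Ideal.span {q} := by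
  obtain ⟨q, rfl⟩ := (IsPrincipalIdealRing.principal I).principal
  refine ⟨q, ?_, rfl⟩
  rcases eq_or_ne q 0 with rfl | hq0
  · simp [IsScaleHomogeneous]
  · have hdvd : q ∣ scaleX ζ q :=
      Ideal.mem_span_singleton.mp (hI (Ideal.mem_span_singleton_self q))
    exact associated_of_dvd_of_natDegree_le hdvd (by simpa using hq0) (natDegree_scaleX ζ q).le

end Scaling

section KerCore

variable {K V : Type*} [Field K] [AddCommGroup V] [Module K V]
variable (A : Type*) [Ring A] [Module A V]

/-- The largest `A`-submodule contained in the kernel of the functional `f`. -/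
def kerCore (f : Dual K V) : Submodule A V where
  carrier := {w | ∀ a : A, f (a • w) = 0}
  add_mem' hv hw a := by simp [hv a, hw a]
  zero_mem' a := by simp
  smul_mem' b w hw a := by simpa only [smul_smul] using hw (a * b)

variable {A}

/-- The map `A → Dual K A` sending `a` to `b ↦ f (b • a • v)` is injective, hence surjective. -/
lemma isCompl_span_singleton_kerCore [Algebra K A] [IsScalarTower K A V] [FiniteDimensional K A]
    {v : V} {f : Dual K V} (h : ∀ a : A, a • v ∈ kerCore A f → a = 0) :
    IsCompl (Submodule.span A {v}) (kerCore A f) := by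
  let Ψ : V →ₗ[K] Dual K A := ((Algebra.lsmul K K V).toLinearMap.compr₂ f).flip
  have hΨ : ∀ w, Ψ w = 0 ↔ w ∈ kerCore A f := fun w => LinearMap.ext_iff
  let B : A →ₗ[K] Dual K A := Ψ ∘ₗ (LinearMap.toSpanSingleton A V v).restrictScalars K
  have hB : Function.Surjective B := by
    rw [← LinearMap.injective_iff_surjective_of_finrank_eq_finrank Subspace.dual_finrank_eq.symm,
      injective_iff_map_eq_zero]
    exact fun a ha => h a ((hΨ _).mp ha)
  refine ⟨Submodule.disjoint_def.mpr fun w hw hwf => ?_, codisjoint_iff.mpr (eq_top_iff.mpr ?_)⟩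
  · obtain ⟨a, rfl⟩ := Submodule.mem_span_singleton.mp hw
    rw [h a hwf, zero_smul]
  · intro w _
    obtain ⟨a, ha⟩ := hB (Ψ w)
    have hwa : w - a • v ∈ kerCore A f := by
      rw [← hΨ, map_sub, sub_eq_zero]
      exact ha.symm
    rw [← add_sub_cancel (a • v) w]
    exact Submodule.add_mem_sup (Submodule.mem_span_singleton.mpr ⟨a, rfl⟩) hwa

end KerCore

section IndecomposablePair

variable {K V : Type*} [Field K] [AddCommGroup V] [Module K V]

section Eigen

variable {g : End K V}

lemma iSup_eigenspace_eq_top_of_orderOf_ne_zero [IsAlgClosed K] [FiniteDimensional K V]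
    (hg : (orderOf g : K) ≠ 0) : ⨆ μ, g.eigenspace μ = ⊤ := by
  have hsep : (X ^ orderOf g - C (1 : K)).Separable := separable_X_pow_sub_C 1 hg one_ne_zero
  exact (End.isSemisimple_of_squarefree_aeval_eq_zero hsep.squarefree
    (by simp [pow_orderOf_eq_one])).iSup_eigenspace_eq_top

lemma exists_eigenvector_apply_ne_zero {a : End K V} (hg : ⨆ μ, g.eigenspace μ = ⊤)
    (ha : a ≠ 0) : ∃ (v : V) (μ : K), g v = μ • v ∧ a v ≠ 0 := by
  by_contra! h
  refine ha (LinearMap.ker_eq_top.mp (top_le_iff.mp (hg ▸ iSup_le fun μ v hv => ?_)))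
  exact h v μ (End.mem_eigenspace_iff.mp hv)

lemma exists_eigenfunctional_apply_ne_zero (hg : ⨆ μ, g.eigenspace μ = ⊤) {u : V} {μ : K}
    (hu : g u = μ • u) (hu0 : u ≠ 0) : ∃ f : Dual K V, (∀ w, f (g w) = μ * f w) ∧ f u ≠ 0 := by
  have hnot : u ∉ ⨆ ν, ⨆ (_ : ν ≠ μ), g.eigenspace ν := fun h =>
    hu0 (Submodule.disjoint_def.mp (g.eigenspaces_iSupIndep μ) u (End.mem_eigenspace_iff.mpr hu) h)
  obtain ⟨f, hfu, hf⟩ := Submodule.exists_le_ker_of_notMem hnot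
  refine ⟨f, fun w => ?_, hfu⟩
  suffices h : ⨆ ν, g.eigenspace ν ≤ LinearMap.ker (f ∘ₗ g - μ • f) by
    simpa [sub_eq_zero] using h (hg ▸ Submodule.mem_top : w ∈ _)
  refine iSup_le fun ν w hw => ?_
  have hgw := End.mem_eigenspace_iff.mp hw
  rcases eq_or_ne ν μ with rfl | hν
  · simp [hgw]
  · have hfw : f w = 0 := hf (Submodule.mem_iSup_of_mem ν (Submodule.mem_iSup_of_mem hν hw))
    simp [hgw, hfw]

end Eigen

section Fitting

lemma ker_mem_invtSubmodule_of_semiconjBy {g a : End K V} {c : Kˣ}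
    (h : SemiconjBy g a (c • a)) : LinearMap.ker a ∈ g.invtSubmodule := by
  intro v hv
  have hav : c • a (g v) = 0 := by
    simpa [LinearMap.mem_ker.mp hv] using (LinearMap.congr_fun h.eq v).symm
  exact (smul_eq_zero_iff_eq c).mp hav

lemma range_mem_invtSubmodule_of_semiconjBy {g a : End K V} {c : Kˣ}
    (h : SemiconjBy g a (c • a)) : LinearMap.range a ∈ g.invtSubmodule := by
  rintro _ ⟨w, rfl⟩
  exact ⟨c • g w, by simpa using (LinearMap.congr_fun h.eq w).symm⟩

/-- Indecomposability of `V` under the joint action of `g` and `x`. The zero space is not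
excluded. -/
def IsIndecomposablePair (g x : End K V) : Prop :=
  ∀ M M' : Submodule K V, M ∈ g.invtSubmodule → M ∈ x.invtSubmodule →
    M' ∈ g.invtSubmodule → M' ∈ x.invtSubmodule → IsCompl M M' → M = ⊥ ∨ M' = ⊥

variable [FiniteDimensional K V]

lemma IsIndecomposablePair.isUnit_or_isNilpotent {g x a : End K V}
    (hind : IsIndecomposablePair g x) {c : Kˣ} (hg : SemiconjBy g a (c • a)) (hx : Commute x a) :
    IsUnit a ∨ IsNilpotent a := by
  obtain ⟨N, hN⟩ := Filter.eventually_atTop.mp a.eventually_isCompl_ker_pow_range_pow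
  have hgN : SemiconjBy g (a ^ (N + 1)) (c ^ (N + 1) • a ^ (N + 1)) := by
    simpa only [_root_.smul_pow] using hg.pow_right (N + 1)
  have hxN : SemiconjBy x (a ^ (N + 1)) ((1 : Kˣ) • a ^ (N + 1)) := by
    simpa only [one_smul] using (hx.pow_right (N + 1)).semiconjBy
  rcases hind _ _ (ker_mem_invtSubmodule_of_semiconjBy hgN)
    (ker_mem_invtSubmodule_of_semiconjBy hxN) (range_mem_invtSubmodule_of_semiconjBy hgN)
    (range_mem_invtSubmodule_of_semiconjBy hxN) (hN (N + 1) N.le_succ) with hker | hrange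
  · exact .inl ((isUnit_pow_iff N.succ_ne_zero).mp ((LinearMap.isUnit_iff_ker_eq_bot _).mpr hker))
  · exact .inr ⟨N + 1, LinearMap.range_eq_bot.mp hrange⟩

lemma IsIndecomposablePair.isUnit_or_isNilpotent_aeval {g x : End K V}
    (hind : IsIndecomposablePair g x) {ζ : Kˣ} (hx : SemiconjBy g x (ζ • x)) {q : K[X]}
    (hq : IsScaleHomogeneous ζ q) : IsUnit (aeval x q) ∨ IsNilpotent (aeval x q) := by
  obtain ⟨c, hc⟩ := hq.exists_scaleX_eq_smul
  have hgq : SemiconjBy g (aeval x q) (c • aeval x q) := by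
    simpa [hc, Units.smul_def] using semiconjBy_aeval_scaleX hx q
  have hxq : Commute x (aeval x q) := by
    simpa using (Commute.all X q).map (aeval x)
  exact hind.isUnit_or_isNilpotent hgq hxq

end Fitting

section Socle

lemma ker_aeval_le_comap_scaleX {γ : V ≃ₗ[K] V} {x : End K V} {ζ : Kˣ}
    (hx : SemiconjBy γ.toLinearMap x (ζ • x)) :
    RingHom.ker (aeval x) ≤ (RingHom.ker (aeval x)).comap (scaleX ζ) := by
  intro q hq
  rw [Ideal.mem_comap, RingHom.mem_ker]
  ext w
  obtain ⟨w, rfl⟩ := γ.surjective w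
  have h := LinearMap.congr_fun (semiconjBy_aeval_scaleX hx q).eq w
  rw [RingHom.mem_ker.mp hq] at h
  simpa using h.symm

lemma mem_radical_ker_aeval_iff {R A : Type*} [CommSemiring R] [Semiring A] [Algebra R A]
    {x : A} {q : R[X]} :
    q ∈ (RingHom.ker (aeval x : R[X] →ₐ[R] A)).radical ↔ IsNilpotent (aeval x q) := by
  simp only [Ideal.mem_radical_iff, RingHom.mem_ker, map_pow, IsNilpotent]

/-- In other words, `s` generates the unique minimal nonzero homogeneous ideal of
`K[X] ⧸ ker (aeval x)`. If `ker (aeval x)` is spanned by `m` and its radical by `p`, then `p`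
divides every homogeneous polynomial acting non-invertibly, so `s = m / p` is a multiple of every
homogeneous proper divisor of `m`. -/
lemma IsIndecomposablePair.exists_isScaleHomogeneous_forall_mem_or_le_ker_aeval
    [FiniteDimensional K V] [Nontrivial V] {γ : V ≃ₗ[K] V} {x : End K V}
    (hind : IsIndecomposablePair γ.toLinearMap x) {ζ : Kˣ}
    (hx : SemiconjBy γ.toLinearMap x (ζ • x)) :
    ∃ s : K[X], IsScaleHomogeneous ζ s ∧ aeval x s ≠ 0 ∧
      ∀ I : Ideal K[X], RingHom.ker (aeval x) ≤ I → I ≤ I.comap (scaleX ζ) →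
        s ∈ I ∨ I ≤ RingHom.ker (aeval x) := by
  set J := RingHom.ker (aeval x : K[X] →ₐ[K] End K V)
  have hJ : J ≤ J.comap (scaleX ζ) := ker_aeval_le_comap_scaleX hx
  obtain ⟨m, hm, hJm⟩ := exists_isScaleHomogeneous_eq_span_singleton hJ
  obtain ⟨p, hp, hJp⟩ := exists_isScaleHomogeneous_eq_span_singleton (I := J.radical)
    (by simpa only [Ideal.comap_radical] using Ideal.radical_mono hJ)
  have hzero : ∀ q, aeval x q = 0 ↔ m ∣ q := fun q => by
    rw [← Ideal.mem_span_singleton, ← hJm, RingHom.mem_ker]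
  have hnilp : ∀ q, IsNilpotent (aeval x q) ↔ p ∣ q := fun q => by
    rw [← Ideal.mem_span_singleton, ← hJp, mem_radical_ker_aeval_iff]
  have hm0 : m ≠ 0 := ne_zero_of_dvd_ne_zero
    (minpoly.ne_zero (Algebra.IsIntegral.isIntegral x)) ((hzero _).mp (minpoly.aeval K x))
  obtain ⟨s, rfl⟩ : p ∣ m := (hnilp m).mp (by simp [(hzero m).mpr dvd_rfl])
  have hp0 : p ≠ 0 := left_ne_zero_of_mul hm0
  refine ⟨s, hm.of_mul_left hp hp0, fun hs => ?_, fun I hJI hI => ?_⟩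
  · have hp1 : p ∣ 1 :=
      (mul_dvd_mul_iff_right (right_ne_zero_of_mul hm0)).mp (by simpa using (hzero s).mp hs)
    exact not_isNilpotent_one (by simpa using (hnilp 1).mpr hp1)
  · obtain ⟨q, hq, rfl⟩ := exists_isScaleHomogeneous_eq_span_singleton hI
    obtain ⟨t, ht⟩ : q ∣ p * s :=
      Ideal.mem_span_singleton.mp (hJI (RingHom.mem_ker.mpr ((hzero _).mpr dvd_rfl)))
    have hthom : IsScaleHomogeneous ζ t :=
      (ht ▸ hm).of_mul_left hq (left_ne_zero_of_mul (ht ▸ hm0))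
    rcases hind.isUnit_or_isNilpotent_aeval hx hthom with htunit | htnil
    · right
      rw [Ideal.span_singleton_le_iff_mem, RingHom.mem_ker, ← htunit.mul_left_eq_zero, ← map_mul,
        ← ht, hzero]
    · left
      obtain ⟨t', rfl⟩ := (hnilp t).mp htnil
      exact Ideal.mem_span_singleton.mpr ⟨t', mul_left_cancel₀ hp0 (by rw [ht]; ring)⟩

end Socle

section Generator

variable {g x : End K V} {ζ : Kˣ} {v : V} {μ ν : K} {f : Dual K V}

lemma mem_kerCore_adjoin_singleton_iff {w : V} :
    w ∈ kerCore (Algebra.adjoin K {x}) f ↔ ∀ q : K[X], f (aeval x q w) = 0 := by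
  change (∀ a : Algebra.adjoin K {x}, f ((a : End K V) w) = 0) ↔ _
  simp [Algebra.adjoin_singleton_eq_range_aeval]

lemma mem_span_adjoin_singleton_iff {w : V} :
    w ∈ Submodule.span (Algebra.adjoin K {x}) {v} ↔ ∃ q : K[X], aeval x q v = w := by
  rw [Submodule.mem_span_singleton]
  simp [Algebra.adjoin_singleton_eq_range_aeval, Subalgebra.smul_def]

lemma span_range_pow_apply_eq_top (h : Submodule.span (Algebra.adjoin K {x}) {v} = ⊤) :
    Submodule.span K (Set.range fun k : ℕ => (x ^ k) v) = ⊤ := by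
  refine eq_top_iff.mpr fun w _ => ?_
  obtain ⟨q, rfl⟩ := mem_span_adjoin_singleton_iff.mp (h ▸ Submodule.mem_top : w ∈ _)
  rw [aeval_eq_sum_range, LinearMap.sum_apply]
  exact Submodule.sum_mem _ fun k _ => Submodule.smul_mem _ _ (Submodule.subset_span ⟨k, rfl⟩)

lemma restrictScalars_adjoin_singleton_mem_invtSubmodule
    (M : Submodule (Algebra.adjoin K {x}) V) : M.restrictScalars K ∈ x.invtSubmodule :=
  fun _ hw => M.smul_mem ⟨x, Algebra.self_mem_adjoin_singleton K x⟩ hw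

lemma aeval_scaleX_apply_eigenvector (hx : SemiconjBy g x (ζ • x)) (hv : g v = μ • v)
    (q : K[X]) : μ • aeval x (scaleX ζ q) v = g (aeval x q v) := by
  rw [← map_smul, ← hv]
  exact (LinearMap.congr_fun (semiconjBy_aeval_scaleX hx q).eq v).symm

lemma restrictScalars_span_mem_invtSubmodule (hx : SemiconjBy g x (ζ • x)) (hv : g v = μ • v) :
    (Submodule.span (Algebra.adjoin K {x}) {v}).restrictScalars K ∈ g.invtSubmodule := by
  intro w hw
  obtain ⟨q, rfl⟩ := mem_span_adjoin_singleton_iff.mp hw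
  exact mem_span_adjoin_singleton_iff.mpr
    ⟨μ • scaleX ζ q, by simpa using aeval_scaleX_apply_eigenvector hx hv q⟩

lemma restrictScalars_kerCore_mem_invtSubmodule (hx : SemiconjBy g x (ζ • x))
    (hf : ∀ w, f (g w) = ν * f w) :
    (kerCore (Algebra.adjoin K {x}) f).restrictScalars K ∈ g.invtSubmodule := by
  intro w hw
  refine mem_kerCore_adjoin_singleton_iff.mpr fun q => ?_
  obtain ⟨q, rfl⟩ := (scaleX ζ).surjective q
  rw [← End.mul_apply, ← (semiconjBy_aeval_scaleX hx q).eq, End.mul_apply, hf,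
    mem_kerCore_adjoin_singleton_iff.mp hw, mul_zero]

/-- The functional `q ↦ f (q(x) v)`. Its `kerCore K[X]` is the kernel of the pairing
`(p, q) ↦ f (p(x) q(x) v)`. -/
noncomputable def orbitFunctional (x : End K V) (f : Dual K V) (v : V) : Dual K K[X] :=
  f ∘ₗ LinearMap.applyₗ v ∘ₗ (aeval x).toLinearMap

lemma mem_kerCore_orbitFunctional_iff {q : K[X]} :
    q ∈ kerCore K[X] (orbitFunctional x f v) ↔ ∀ r : K[X], f (aeval x (r * q) v) = 0 :=
  Iff.rfl

lemma ker_aeval_le_kerCore_orbitFunctional :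
    RingHom.ker (aeval x) ≤ kerCore K[X] (orbitFunctional x f v) := by
  intro q hq
  refine mem_kerCore_orbitFunctional_iff.mpr fun r => ?_
  rw [map_mul, RingHom.mem_ker.mp hq, mul_zero, LinearMap.zero_apply, map_zero]

lemma kerCore_orbitFunctional_le_comap_scaleX (hx : SemiconjBy g x (ζ • x)) (hμ : μ ≠ 0)
    (hv : g v = μ • v) (hf : ∀ w, f (g w) = ν * f w) :
    kerCore K[X] (orbitFunctional x f v) ≤
      Ideal.comap (scaleX ζ) (kerCore K[X] (orbitFunctional x f v)) := by
  intro q hq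
  refine mem_kerCore_orbitFunctional_iff.mpr fun r => ?_
  obtain ⟨r, rfl⟩ := (scaleX ζ).surjective r
  have h : μ * f (aeval x (scaleX ζ r * scaleX ζ q) v) = 0 := by
    rw [← smul_eq_mul, ← map_smul, ← map_mul, aeval_scaleX_apply_eigenvector hx hv, hf,
      mem_kerCore_orbitFunctional_iff.mp hq, mul_zero]
  exact (mul_eq_zero.mp h).resolve_left hμ

lemma isCompl_span_kerCore_adjoin_singleton [FiniteDimensional K V]
    (h : kerCore K[X] (orbitFunctional x f v) ≤ RingHom.ker (aeval x)) :
    IsCompl (Submodule.span (Algebra.adjoin K {x}) {v}) (kerCore (Algebra.adjoin K {x}) f) := by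
  refine isCompl_span_singleton_kerCore fun ⟨a, ha⟩ hav => Subtype.ext ?_
  rw [Algebra.adjoin_singleton_eq_range_aeval] at ha
  obtain ⟨q, rfl⟩ := ha
  refine h (mem_kerCore_orbitFunctional_iff.mpr fun r => ?_)
  rw [map_mul]
  exact mem_kerCore_adjoin_singleton_iff.mp hav r

lemma IsIndecomposablePair.span_adjoin_singleton_eq_top [FiniteDimensional K V]
    (hind : IsIndecomposablePair g x) (hx : SemiconjBy g x (ζ • x)) (hv : g v = μ • v)
    (hv0 : v ≠ 0) (hf : ∀ w, f (g w) = ν * f w)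
    (h : kerCore K[X] (orbitFunctional x f v) ≤ RingHom.ker (aeval x)) :
    Submodule.span (Algebra.adjoin K {x}) {v} = ⊤ := by
  have hcompl := isCompl_span_kerCore_adjoin_singleton h
  rcases hind _ _ (restrictScalars_span_mem_invtSubmodule hx hv)
    (restrictScalars_adjoin_singleton_mem_invtSubmodule _)
    (restrictScalars_kerCore_mem_invtSubmodule hx hf)
    (restrictScalars_adjoin_singleton_mem_invtSubmodule _)
    ((Submodule.isCompl_restrictScalars_iff K).mpr hcompl) with hspan | hcore
  · rw [Submodule.restrictScalars_eq_bot_iff, Submodule.span_singleton_eq_bot] at hspan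
    exact absurd hspan hv0
  · rw [Submodule.restrictScalars_eq_bot_iff] at hcore
    exact eq_top_of_isCompl_bot (hcore ▸ hcompl)

end Generator

/-- For `ζ = 0` the relation forces `x = 0`, so that `c = 1` works. -/
lemma exists_units_semiconjBy {γ : V ≃ₗ[K] V} {x : End K V} {ζ : K}
    (hx : γ.toLinearMap ∘ₗ x = ζ • (x ∘ₗ γ.toLinearMap)) :
    ∃ c : Kˣ, SemiconjBy γ.toLinearMap x (c • x) := by
  rcases eq_or_ne ζ 0 with rfl | hζ
  · have hx0 : x = 0 := by
      ext v
      simpa using LinearMap.congr_fun hx v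
    exact ⟨1, by simp [hx0]⟩
  · exact ⟨Units.mk0 ζ hζ, hx⟩

theorem indecomposable_homogeneous_cyclic_generator_general [FiniteDimensional K V] [Nontrivial V]
    (γ : V ≃ₗ[K] V) (hγ : ⨆ μ, End.eigenspace γ.toLinearMap μ = ⊤) (ζ : K) (x : End K V)
    (hx : γ.toLinearMap ∘ₗ x = ζ • (x ∘ₗ γ.toLinearMap))
    (hind : IsIndecomposablePair γ.toLinearMap x) :
    ∃ (v : V) (μ : K), v ≠ 0 ∧ γ v = μ • v ∧
      Submodule.span K (Set.range fun k : ℕ => (x ^ k) v) = ⊤ := by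
  obtain ⟨ζ, hx⟩ := exists_units_semiconjBy hx
  obtain ⟨s, hs, hsx, hmin⟩ := hind.exists_isScaleHomogeneous_forall_mem_or_le_ker_aeval hx
  obtain ⟨v, μ, hv, hsv⟩ := exists_eigenvector_apply_ne_zero hγ hsx
  have hv0 : v ≠ 0 := ne_zero_of_map hsv
  have hμ : μ ≠ 0 := by
    rintro rfl
    exact hv0 (γ.map_eq_zero_iff.mp (hv.trans (zero_smul K v)))
  obtain ⟨c, hc⟩ := hs.exists_scaleX_eq_smul
  have hγsv : γ.toLinearMap (aeval x s v) = (μ * c) • aeval x s v := by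
    rw [← aeval_scaleX_apply_eigenvector hx hv, hc, Units.smul_def, map_smul,
      LinearMap.smul_apply, smul_smul]
  obtain ⟨f, hf, hfsv⟩ := exists_eigenfunctional_apply_ne_zero hγ hγsv hsv
  have hpairing : kerCore K[X] (orbitFunctional x f v) ≤ RingHom.ker (aeval x) :=
    (hmin _ ker_aeval_le_kerCore_orbitFunctional
      (kerCore_orbitFunctional_le_comap_scaleX hx hμ hv hf)).resolve_left fun hsmem =>
        hfsv (by simpa using mem_kerCore_orbitFunctional_iff.mp hsmem 1)
  exact ⟨v, μ, hv0, hv,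
    span_range_pow_apply_eq_top (hind.span_adjoin_singleton_eq_top hx hv hv0 hf hpairing)⟩

end IndecomposablePair

/-- If `(γ, x)` acts indecomposably on `V`, where `γ` has finite order, `ζ` is a root of
unity and `γ∘x = ζ·(x∘γ)`, then `V` admits a homogeneous cyclic generator: an eigenvector
`v` of `γ` whose `x`-orbit spans `V`. -/
theorem indecomposable_homogeneous_cyclic_generator
    {V : Type*} [AddCommGroup V] [Module ℂ V] [FiniteDimensional ℂ V] [Nontrivial V]
    (γ : V ≃ₗ[ℂ] V) (hγ : IsOfFinOrder γ)
    (ζ : ℂ) (hζ : ∃ n : ℕ, 0 < n ∧ ζ ^ n = 1)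
    (x : Module.End ℂ V)
    (hx : γ.toLinearMap ∘ₗ x = ζ • (x ∘ₗ γ.toLinearMap))
    (hind : ∀ M M' : Submodule ℂ V,
      (∀ v ∈ M, γ v ∈ M) → (∀ v ∈ M, x v ∈ M) →
      (∀ v ∈ M', γ v ∈ M') → (∀ v ∈ M', x v ∈ M') →
      IsCompl M M' → M = ⊥ ∨ M' = ⊥) :
    ∃ (v : V) (μ : ℂ), v ≠ 0 ∧ γ v = μ • v ∧
      Submodule.span ℂ (Set.range fun k : ℕ => (x ^ k) v) = ⊤ :=
  have hfin := LinearEquiv.automorphismGroup.toLinearMapMonoidHom.isOfFinOrder hγ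
  indecomposable_homogeneous_cyclic_generator_general γ (iSup_eigenspace_eq_top_of_orderOf_ne_zero
    (Nat.cast_ne_zero.mpr hfin.orderOf_pos.ne')) ζ x hx hind
end

section
/- Let V be a finite-dimensional complex vector space, ω a bilinear form on V with ω(a,b) = −ω(b,a) for all a,b, m a positive even integer, ζ ∈ ℂ a primitive m-th root of unity, γ ∈ GL(V) with ω(γa, γb) = ω(a,b) for all a,b and γ^m = id, and x ∈ End(V) with ω(xa, b) + ω(a, xb) = 0 for all a,b and γ∘x = ζ·(x∘γ). Then for every eigenvector v of γ and all r, s ∈ ℕ, one has ω(x^r v, x^s v) = 0; in other words, the cyclic ℂ[x]-submodule generated by any γ-eigenvector is isotropic for ω. -/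
/-!
Write `m = 2k`. Since `ζ ^ k = -1`, the power `δ = γ ^ k` is an isometric involution of `ω` which
anticommutes with `x`, and every eigenvector `v` of `γ` is one of `δ`. As `x` is skew-adjoint,
`ω (x ^ r v) (x ^ s v) = ± ω v (x ^ (r + s) v)`. For even `n`, `x ^ n` is self-adjoint, so the
antisymmetry of `ω` makes `ω v (x ^ n v)` equal to its own negative; for odd `n`, `x ^ n`
anticommutes with `δ`, and applying the isometry `δ` to both arguments does the same.
-/

theorem semiconjBy_pow_of_semiconjBy_smul {M A : Type*} [Monoid M] [Monoid A] [MulAction M A]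
    [SMulCommClass M A A] [IsScalarTower M A A] {c : M} {a x : A}
    (h : SemiconjBy a x (c • x)) (n : ℕ) : SemiconjBy (a ^ n) x (c ^ n • x) := by
  induction n with
  | zero => simp
  | succ n ih =>
    rw [pow_succ', pow_succ, mul_smul]
    exact (h.smul_right (c ^ n)).mul_left ih

theorem isAdjointPair_pow {R V N : Type*} [CommSemiring R] [AddCommMonoid V] [Module R V]
    [AddCommMonoid N] [Module R N] {I : R →+* R} {ω : V →ₗ[R] V →ₛₗ[I] N} {f g : Module.End R V}
    (h : ω.IsAdjointPair ω f g) (n : ℕ) : ω.IsAdjointPair ω ⇑(f ^ n) ⇑(g ^ n) := by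
  induction n with
  | zero => exact LinearMap.isAdjointPair_one
  | succ n ih =>
    rw [pow_succ f, pow_succ' g]
    exact ih.mul h

theorem apply_pow_apply_pow_of_isometry {R V N : Type*} [CommSemiring R] [AddCommMonoid V]
    [Module R V] [AddCommMonoid N] [Module R N] {I : R →+* R} {ω : V →ₗ[R] V →ₛₗ[I] N}
    {γ : Module.End R V}
    (hγ : ∀ a b, ω (γ a) (γ b) = ω a b) (n : ℕ) (a b : V) :
    ω ((γ ^ n) a) ((γ ^ n) b) = ω a b := by
  induction n with
  | zero => rfl
  | succ n ih => rw [pow_succ', Module.End.mul_apply, Module.End.mul_apply, hγ, ih]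

section

variable {R V N : Type*} [CommRing R] [AddCommGroup V] [Module R V] [AddCommGroup N] [Module R N]
  {ω : V →ₗ[R] V →ₗ[R] N}

theorem apply_self_eq_neg_of_isSelfAdjoint (hω : ∀ a b, ω a b = -ω b a) {y : V → V}
    (hy : ω.IsSelfAdjoint y) (v : V) : ω v (y v) = -ω v (y v) :=
  (hω v (y v)).trans (congrArg Neg.neg (hy v v))

theorem apply_self_eq_neg_of_anticommute {δ y : Module.End R V}
    (hδω : ∀ a b, ω (δ a) (δ b) = ω a b) (hδ : δ ^ 2 = 1) (hδy : SemiconjBy δ y (-y))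
    {v : V} {ν : R} (hv : δ v = ν • v) : ω v (y v) = -ω v (y v) := by
  have hδyv : δ (y v) = -(ν • y v) := by
    simpa [hv] using LinearMap.congr_fun hδy.eq v
  have hν : ν • ν • v = v := by
    simpa [pow_two, hv] using LinearMap.congr_fun hδ v
  calc ω v (y v) = ω (δ v) (δ (y v)) := (hδω v (y v)).symm
    _ = -ω (ν • ν • v) (y v) := by
      rw [hv, hδyv]
      simp only [map_neg, map_smul, LinearMap.smul_apply]
    _ = -ω v (y v) := by rw [hν]

theorem apply_pow_self_eq_neg (hω : ∀ a b, ω a b = -ω b a) {δ x : Module.End R V}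
    (hδω : ∀ a b, ω (δ a) (δ b) = ω a b) (hδ : δ ^ 2 = 1) (hx : ω.IsSkewAdjoint x)
    (hδx : SemiconjBy δ x (-x)) {v : V} {ν : R} (hv : δ v = ν • v) (n : ℕ) :
    ω v ((x ^ n) v) = -ω v ((x ^ n) v) := by
  rcases n.even_or_odd with hn | hn
  · have hself : ω.IsSelfAdjoint ⇑(x ^ n) := by
      simpa only [LinearMap.IsSelfAdjoint, LinearMap.IsPairSelfAdjoint, hn.neg_pow] using
        isAdjointPair_pow (g := -x) hx n
    exact apply_self_eq_neg_of_isSelfAdjoint hω hself v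
  · have hanti : SemiconjBy δ (x ^ n) (-x ^ n) := by
      simpa only [hn.neg_pow] using hδx.pow_right n
    exact apply_self_eq_neg_of_anticommute hδω hδ hanti hv

theorem apply_pow_apply_pow_of_isSkewAdjoint {x : Module.End R V} (hx : ω.IsSkewAdjoint x)
    (r s : ℕ) (a b : V) :
    ω ((x ^ r) a) ((x ^ s) b) = (-1 : R) ^ r • ω a ((x ^ (r + s)) b) := by
  rw [isAdjointPair_pow (g := -x) hx r, ← neg_one_smul R x, smul_pow, LinearMap.smul_apply,
    map_smul, pow_add, Module.End.mul_apply]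

end

theorem typeCII_cyclic_submodule_isotropic_general
    {R V N : Type*} [CommRing R] [IsDomain R] [AddCommGroup V] [Module R V]
    [AddCommGroup N] [Module R N] [Module.IsTorsionFree R N]
    (ω : V →ₗ[R] V →ₗ[R] N) (hω : ∀ a b : V, ω a b = -ω b a)
    (m : ℕ) (hm : 0 < m) (hme : Even m) (ζ : R) (hζ : IsPrimitiveRoot ζ m)
    (γ : Module.End R V) (hγω : ∀ a b : V, ω (γ a) (γ b) = ω a b) (hγm : γ ^ m = 1)
    (x : Module.End R V) (hxω : ∀ a b : V, ω (x a) b + ω a (x b) = 0)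
    (hγx : γ ∘ₗ x = ζ • (x ∘ₗ γ)) (v : V) (μ : R) (hv : γ v = μ • v) (r s : ℕ) :
    ω ((x ^ r) v) ((x ^ s) v) = 0 := by
  obtain ⟨k, rfl⟩ := even_iff_exists_two_mul.mp hme
  have hζk : IsPrimitiveRoot (ζ ^ k) 2 := hζ.pow hm (mul_comm 2 k)
  have hδ : (γ ^ k) ^ 2 = 1 := by rw [← pow_mul', hγm]
  have hδx : SemiconjBy (γ ^ k) x (-x) := by
    have hγx' : SemiconjBy γ x (ζ • x) := hγx
    simpa only [hζk.eq_neg_one_of_two_right, neg_one_smul] using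
      semiconjBy_pow_of_semiconjBy_smul hγx' k
  have hx : ω.IsSkewAdjoint x := fun a b ↦ by
    simpa using eq_neg_of_add_eq_zero_left (hxω a b)
  rcases eq_or_ne v 0 with rfl | hv0
  · simp
  have hδv : (γ ^ k) v = μ ^ k • v :=
    Module.End.HasEigenvector.pow_apply ⟨Module.End.mem_eigenspace_iff.mpr hv, hv0⟩ k
  have hδω : ∀ a b, ω ((γ ^ k) a) ((γ ^ k) b) = ω a b := apply_pow_apply_pow_of_isometry hγω k
  have hneg := apply_pow_self_eq_neg hω hδω hδ hx hδx hδv (r + s)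
  have h2 : (2 : R) ≠ 0 := hζk.neZero'.out
  have hzero : ω v ((x ^ (r + s)) v) = 0 :=
    (smul_eq_zero_iff_right h2).mp ((two_smul R _).trans (eq_neg_iff_add_eq_zero.mp hneg))
  rw [apply_pow_apply_pow_of_isSkewAdjoint hx, hzero, smul_zero]

/-- Type CII isotropy: for `x ∈ 𝔤₁` of a type CII grading of `𝔰𝔭(V, ω)`, the cyclic
`ℂ[x]`-submodule generated by any `γ`-eigenvector is isotropic for `ω`. -/
theorem typeCII_cyclic_submodule_isotropic
    {V : Type*} [AddCommGroup V] [Module ℂ V] [FiniteDimensional ℂ V]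
    (ω : V →ₗ[ℂ] V →ₗ[ℂ] ℂ) (hω : ∀ a b : V, ω a b = -ω b a)
    (m : ℕ) (hm : 0 < m) (hme : Even m) (ζ : ℂ) (hζ : IsPrimitiveRoot ζ m)
    (γ : V ≃ₗ[ℂ] V) (hγω : ∀ a b : V, ω (γ a) (γ b) = ω a b) (hγm : γ ^ m = 1)
    (x : Module.End ℂ V) (hxω : ∀ a b : V, ω (x a) b + ω a (x b) = 0)
    (hγx : γ.toLinearMap ∘ₗ x = ζ • (x ∘ₗ γ.toLinearMap)) :
    ∀ (v : V) (μ : ℂ), v ≠ 0 → γ v = μ • v →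
      ∀ r s : ℕ, ω ((x ^ r) v) ((x ^ s) v) = 0 := by
  have hγm' : γ.toLinearMap ^ m = 1 := by
    rw [← LinearEquiv.automorphismGroup.toLinearMapMonoidHom_apply, ← map_pow, hγm, map_one]
  exact fun v μ _ hv ↦ typeCII_cyclic_submodule_isotropic_general ω hω m hm hme ζ hζ γ.toLinearMap
    hγω hγm' x hxω hγx v μ hv
end

section
/- Let V be a finite-dimensional complex vector space, B a bilinear form on V, m₀ a positive odd integer, ζ ∈ ℂ a primitive 2m₀-th root of unity, γ ∈ GL(V) satisfying B(a,b) = B(b, γa) for all a,b and γ^{m₀} = −id, and x ∈ End(V) satisfying B(xa, b) = −ζ·B(a, xb) for all a,b and γ∘x = ζ²·(x∘γ). Then for every eigenvector v of γ and all r, s ∈ ℕ, one has B(x^r v, x^s v) = 0; in other words, the cyclic ℂ[x]-submodule generated by any γ-eigenvector is isotropic for B. -/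
/-!
If `B(xa, b) = c B(a, xb)`, every pairing `B(x ^ r v, x ^ s v)` is a scalar multiple of
`β = B(v, x ^ n v)` with `n = r + s`. For `γ v = μ v`, swapping the two arguments of `B` at the
cost of a `γ` and then moving `x ^ n` back to the right gives `β = μ c ^ n β`. The `m`-th power of
the scalar `μ c ^ n` acts on `β` as `-1`, because `γ ^ m = -1` and `c ^ m = 1`, so `2 β = 0`.
In type ²AII one has `c = -ζ`.
-/

section AdjointPair

variable {R V M : Type*} [CommSemiring R] [AddCommMonoid V] [Module R V] [AddCommMonoid M]
  [Module R M] {B : V →ₗ[R] V →ₗ[R] M}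

theorem isAdjointPair_pow_s13 {f g : Module.End R V} (h : B.IsAdjointPair B f g) (n : ℕ) :
    B.IsAdjointPair B (f ^ n : Module.End R V) (g ^ n : Module.End R V) := by
  induction n with
  | zero => exact LinearMap.isAdjointPair_one
  | succ n ih =>
    rw [pow_succ f, pow_succ' g]
    exact ih.mul h

theorem apply_pow_left_of_isAdjointPair_smul {x : Module.End R V} {c : R}
    (hx : B.IsAdjointPair B x (c • x)) (n : ℕ) (a b : V) :
    B ((x ^ n) a) b = c ^ n • B a ((x ^ n) b) := by
  rw [isAdjointPair_pow_s13 (g := c • x) hx n a b, smul_pow, LinearMap.smul_apply, map_smul]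

theorem apply_pow_apply_pow_of_isAdjointPair_smul {x : Module.End R V} {c : R}
    (hx : B.IsAdjointPair B x (c • x)) (r s : ℕ) (a b : V) :
    B ((x ^ r) a) ((x ^ s) b) = c ^ r • B a ((x ^ (r + s)) b) := by
  rw [apply_pow_left_of_isAdjointPair_smul hx, pow_add, Module.End.mul_apply]

theorem apply_pow_self_eq_smul_of_apply_eq_smul {γ x : Module.End R V} {c μ : R} {v : V}
    (hγ : ∀ a b, B a b = B b (γ a)) (hx : B.IsAdjointPair B x (c • x)) (hv : γ v = μ • v)
    (n : ℕ) : B v ((x ^ n) v) = (μ * c ^ n) • B v ((x ^ n) v) :=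
  calc
    B v ((x ^ n) v) = B ((x ^ n) v) (γ v) := hγ v _
    _ = μ • B ((x ^ n) v) v := by rw [hv, map_smul]
    _ = (μ * c ^ n) • B v ((x ^ n) v) := by
      rw [apply_pow_left_of_isAdjointPair_smul hx, smul_smul]

end AdjointPair

theorem eq_zero_of_smul_eq_self_of_pow_smul_eq_neg {R M : Type*} [Semiring R] [AddCommGroup M]
    [Module R M] (h2 : IsSMulRegular M (2 : R)) {a : R} {m : ℕ} {y : M} (hfix : a • y = y)
    (hneg : a ^ m • y = -y) : y = 0 := by
  have hpow : a ^ m • y = y := pow_mem (S := MulAction.stabilizerSubmonoid R y) hfix m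
  have hy : y = -y := hpow.symm.trans hneg
  apply h2
  simpa only [two_smul, smul_zero] using eq_neg_iff_add_eq_zero.mp hy

theorem neg_pow_eq_one_of_isPrimitiveRoot_two_mul {R : Type*} [CommRing R] [NoZeroDivisors R]
    {ζ : R} {m : ℕ} (hζ : IsPrimitiveRoot ζ (2 * m)) (hm : Odd m) : (-ζ) ^ m = 1 := by
  have hhalf : ζ ^ m = -1 :=
    (hζ.pow (Nat.mul_pos two_pos hm.pos) (mul_comm 2 m)).eq_neg_one_of_two_right
  rw [hm.neg_pow, hhalf, neg_neg]

theorem typeTwoAII_cyclic_submodule_isotropic_general {R V M : Type*} [CommRing R]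
    [AddCommGroup V] [Module R V] [AddCommGroup M] [Module R M] (h2 : IsSMulRegular M (2 : R))
    {B : V →ₗ[R] V →ₗ[R] M} {γ x : Module.End R V} {m : ℕ} {c : R}
    (hγB : ∀ a b, B a b = B b (γ a)) (hγm : γ ^ m = -1)
    (hx : B.IsAdjointPair B x (c • x)) (hc : c ^ m = 1)
    {v : V} {μ : R} (hv : γ v = μ • v) (r s : ℕ) :
    B ((x ^ r) v) ((x ^ s) v) = 0 := by
  have hμ : μ ^ m • v = -v := by
    simpa [hγm] using
      (Module.End.aeval_apply_of_mem_apply_eq_smul (p := Polynomial.X ^ m) hv).symm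
  have hneg : (μ * c ^ (r + s)) ^ m • B v ((x ^ (r + s)) v) = -B v ((x ^ (r + s)) v) := by
    rw [mul_pow, pow_right_comm, hc, one_pow, mul_one, ← LinearMap.map_smul₂, hμ,
      LinearMap.map_neg₂]
  have hfix := apply_pow_self_eq_smul_of_apply_eq_smul hγB hx hv (r + s)
  rw [apply_pow_apply_pow_of_isAdjointPair_smul hx,
    eq_zero_of_smul_eq_self_of_pow_smul_eq_neg h2 hfix.symm hneg, smul_zero]

/-- Type ²AII isotropy: for `x ∈ 𝔤₁` of a type ²AII grading (with `m = 2m₀`, `m₀` odd,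
`B(a,b) = B(b, γa)`, `γ^{m₀} = −id`), the cyclic `ℂ[x]`-submodule generated by any
`γ`-eigenvector is isotropic for `B`. -/
theorem typeTwoAII_cyclic_submodule_isotropic
    {V : Type*} [AddCommGroup V] [Module ℂ V] [FiniteDimensional ℂ V]
    (B : V →ₗ[ℂ] V →ₗ[ℂ] ℂ)
    (m₀ : ℕ) (hm₀ : 0 < m₀) (hodd : Odd m₀) (ζ : ℂ) (hζ : IsPrimitiveRoot ζ (2 * m₀))
    (γ : V ≃ₗ[ℂ] V) (hγB : ∀ a b : V, B a b = B b (γ a))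
    (hγm : ∀ v : V, (γ ^ m₀) v = -v)
    (x : Module.End ℂ V) (hxB : ∀ a b : V, B (x a) b = -(ζ * B a (x b)))
    (hγx : γ.toLinearMap ∘ₗ x = (ζ ^ 2) • (x ∘ₗ γ.toLinearMap)) :
    ∀ (v : V) (μ : ℂ), v ≠ 0 → γ v = μ • v →
      ∀ r s : ℕ, B ((x ^ r) v) ((x ^ s) v) = 0 := by
  have hγm' : (γ.toLinearMap : Module.End ℂ V) ^ m₀ = -1 := LinearMap.ext fun v ↦ by
    simpa [Module.End.pow_apply, LinearEquiv.pow_apply] using hγm v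
  exact fun v μ _ hv ↦ typeTwoAII_cyclic_submodule_isotropic_general (.of_ne_zero two_ne_zero)
    hγB hγm' (fun a b ↦ by simpa using hxB a b)
    (neg_pow_eq_one_of_isPrimitiveRoot_two_mul hζ hodd) hv
end
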